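/- arXiv:2011.06173 — 2 statements merged into one kernel-verified Lean document; each statement's English description precedes it below -/
import Mathlib

section
/- Let G be a finite simple graph that is 2P4-free, let v1,…,v7 induce a C7 in G with vertex set N0, and let x be a vertex outside N0 such that N0(x) = {v_i} or N0(x) = {v_i, v_{i+2}} for some index i. Let C be a connected component of the subgraph of G induced by N2, and suppose x is adjacent to at least one but not all vertices of C. Then x has no neighbor in N2∖C, and moreover |N0(x)| = 2. -/
/-- `a b c d` form an induced path on four vertices in `G`. -/
def IsInducedP4 {V : Type*} (G : SimpleGraph V) (a b c d : V) : Prop :=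
  a ≠ b ∧ a ≠ c ∧ a ≠ d ∧ b ≠ c ∧ b ≠ d ∧ c ≠ d ∧
  G.Adj a b ∧ G.Adj b c ∧ G.Adj c d ∧ ¬ G.Adj a c ∧ ¬ G.Adj a d ∧ ¬ G.Adj b d

/-- `G` is `2P₄`-free. -/
def TwoP4Free {V : Type*} (G : SimpleGraph V) : Prop :=
  ¬ ∃ a₁ a₂ a₃ a₄ b₁ b₂ b₃ b₄ : V,
      IsInducedP4 G a₁ a₂ a₃ a₄ ∧ IsInducedP4 G b₁ b₂ b₃ b₄ ∧
      ∀ u ∈ ({a₁, a₂, a₃, a₄} : Set V), ∀ w ∈ ({b₁, b₂, b₃, b₄} : Set V),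
        u ≠ w ∧ ¬ G.Adj u w

/-- The vertices `v 0, …, v (n-1)` form an induced cycle `C_n` in `G`. -/
def IsInducedCycle {V : Type*} (G : SimpleGraph V) (n : ℕ) (v : ZMod n → V) : Prop :=
  Function.Injective v ∧ ∀ i j : ZMod n, G.Adj (v i) (v j) ↔ (j = i + 1 ∨ i = j + 1)

/-- `C` is a connected component of the subgraph of `G` induced by `S`:
it is a nonempty subset of `S` inducing a connected graph, and it is closed
under adjacency within `S`. -/
def IsCompOf {V : Type*} (G : SimpleGraph V) (S C : Set V) : Prop :=
  C.Nonempty ∧ C ⊆ S ∧ (G.induce C).Connected ∧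
  ∀ u ∈ C, ∀ w ∈ S, G.Adj u w → w ∈ C

/-!
Since `C` is connected and `x` is adjacent to some but not all of it, `C` has an edge `ab` with `x`
adjacent to `a` but not to `b`. If `y` is a neighbour of `x` with no neighbour in `C`, then
`b a x y` is an induced `P₄`. As `C` has no neighbour on the cycle, `2P₄`-freeness forces `x` or `y`
to be adjacent to one of any four consecutive vertices of the cycle. A neighbour `y` of `x` that has
no neighbour in `C` or on the cycle contradicts this for `v (i + 3), …, v (i + 6)`. If `v i` is the
only neighbour of `x` on the cycle, `y = v i` contradicts it for `v (i + 2), …, v (i + 5)`.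
-/

theorem isInducedP4_of_adj {V : Type*} {G : SimpleGraph V} {a b c d : V} (hab : G.Adj a b)
    (hbc : G.Adj b c) (hcd : G.Adj c d) (hac : ¬ G.Adj a c) (had : ¬ G.Adj a d)
    (hbd : ¬ G.Adj b d) : IsInducedP4 G a b c d := by
  refine ⟨hab.ne, ?_, ?_, hbc.ne, ?_, hcd.ne, hab, hbc, hcd, hac, had, hbd⟩
  · rintro rfl
    exact had hcd
  · rintro rfl
    exact hbd hab.symm
  · rintro rfl
    exact had hab

theorem IsInducedP4.exists_adj {V : Type*} {G : SimpleGraph V} {a b c d : V}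
    (h : IsInducedP4 G a b c d) {u : V} (hu : u ∈ ({a, b, c, d} : Set V)) :
    ∃ w ∈ ({a, b, c, d} : Set V), G.Adj w u := by
  obtain ⟨-, -, -, -, -, -, hab, hbc, hcd, -⟩ := h
  rcases hu with rfl | rfl | rfl | rfl
  · exact ⟨b, by simp, hab.symm⟩
  · exact ⟨a, by simp, hab⟩
  · exact ⟨b, by simp, hbc⟩
  · exact ⟨c, by simp, hcd⟩

theorem TwoP4Free.exists_adj {V : Type*} {G : SimpleGraph V} (hG : TwoP4Free G)
    {a₁ a₂ a₃ a₄ b₁ b₂ b₃ b₄ : V} (ha : IsInducedP4 G a₁ a₂ a₃ a₄)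
    (hb : IsInducedP4 G b₁ b₂ b₃ b₄) :
    ∃ u ∈ ({a₁, a₂, a₃, a₄} : Set V), ∃ w ∈ ({b₁, b₂, b₃, b₄} : Set V), G.Adj u w := by
  by_contra! hanti
  refine hG ⟨a₁, a₂, a₃, a₄, b₁, b₂, b₃, b₄, ha, hb, fun u hu w hw => ⟨?_, hanti u hu w hw⟩⟩
  -- A vertex common to both paths has a neighbour on the first one, against `hanti`.
  rintro rfl
  obtain ⟨t, ht, htu⟩ := ha.exists_adj hu
  exact hanti t ht u hw htu

/-- A vertex `x` is mixed on a set `C` if it is adjacent to at least one but not to all vertices of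
`C`. Membership of `x` in `C` is not excluded. -/
def IsMixedOn {V : Type*} (G : SimpleGraph V) (x : V) (C : Set V) : Prop :=
  (∃ u ∈ C, G.Adj x u) ∧ ∃ u ∈ C, ¬ G.Adj x u

namespace IsMixedOn

variable {V : Type*} {G : SimpleGraph V} {C : Set V} {x y : V}

theorem exists_isInducedP4 (hx : IsMixedOn G x C) (hC : (G.induce C).Preconnected)
    (hxy : G.Adj x y) (hy : ∀ u ∈ C, ¬ G.Adj u y) :
    ∃ b ∈ C, ∃ a ∈ C, IsInducedP4 G b a x y := by
  obtain ⟨⟨u, hu, hxu⟩, w, hw, hxw⟩ := hx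
  obtain ⟨p⟩ := hC ⟨u, hu⟩ ⟨w, hw⟩
  obtain ⟨d, -, hxa, hxb⟩ := p.exists_boundary_dart {c | G.Adj x c} hxu hxw
  exact ⟨d.snd, d.snd.2, d.fst, d.fst.2, isInducedP4_of_adj d.adj.symm (G.adj_symm hxa) hxy
    (fun hbx => hxb hbx.symm) (hy _ d.snd.2) (hy _ d.fst.2)⟩

theorem exists_adj_of_isInducedP4 (hx : IsMixedOn G x C) (hG : TwoP4Free G)
    (hC : (G.induce C).Preconnected) (hxy : G.Adj x y) (hy : ∀ u ∈ C, ¬ G.Adj u y)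
    {q₁ q₂ q₃ q₄ : V} (hq : IsInducedP4 G q₁ q₂ q₃ q₄)
    (hCq : ∀ u ∈ C, ∀ q ∈ ({q₁, q₂, q₃, q₄} : Set V), ¬ G.Adj u q) :
    ∃ q ∈ ({q₁, q₂, q₃, q₄} : Set V), G.Adj x q ∨ G.Adj y q := by
  obtain ⟨b, hb, a, ha, hP⟩ := hx.exists_isInducedP4 hC hxy hy
  obtain ⟨u, hu, q, hq, huq⟩ := hG.exists_adj hP hq
  rcases hu with rfl | rfl | rfl | rfl
  · exact absurd huq (hCq _ hb q hq)
  · exact absurd huq (hCq _ ha q hq)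
  · exact ⟨q, hq, .inl huq⟩
  · exact ⟨q, hq, .inr huq⟩

end IsMixedOn

theorem zmod_natCast_ne_natCast {n k l : ℕ} (hkl : k < l) (hln : l < n + k) :
    (k : ZMod n) ≠ l := by
  rw [Ne, ZMod.natCast_eq_natCast_iff, Nat.modEq_iff_dvd' hkl.le]
  intro hdvd
  have := Nat.le_of_dvd (Nat.sub_pos_of_lt hkl) hdvd
  omega

namespace IsInducedCycle

variable {V : Type*} {G : SimpleGraph V} {n : ℕ} {v : ZMod n → V}

theorem adj_add_one (hv : IsInducedCycle G n v) (i : ZMod n) : G.Adj (v i) (v (i + 1)) :=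
  (hv.2 _ _).2 (.inl rfl)

theorem apply_add_natCast_ne (hv : IsInducedCycle G n v) (i : ZMod n) {k l : ℕ} (hkl : k < l)
    (hln : l < n + k) : v (i + k) ≠ v (i + l) := by
  rw [hv.1.ne_iff, (add_right_injective i).ne_iff]
  exact zmod_natCast_ne_natCast hkl hln

theorem not_adj_add_natCast (hv : IsInducedCycle G n v) (i : ZMod n) {k l : ℕ}
    (hkl : k + 1 < l) (hln : l + 1 < n + k) : ¬ G.Adj (v (i + k)) (v (i + l)) := by
  have hsucc : ((k + 1 : ℕ) : ZMod n) ≠ l := zmod_natCast_ne_natCast hkl (by omega)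
  have hpred : (k : ZMod n) ≠ (l + 1 : ℕ) := zmod_natCast_ne_natCast (by omega) hln
  rw [hv.2, add_assoc, add_assoc, add_right_inj, add_right_inj]
  rintro (h | h)
  · exact hsucc (by simp [h])
  · exact hpred (by simp [h])

theorem isInducedP4 (hv : IsInducedCycle G n v) (hn : 5 ≤ n) (i : ZMod n) :
    IsInducedP4 G (v (i + (0 : ℕ))) (v (i + (1 : ℕ))) (v (i + (2 : ℕ))) (v (i + (3 : ℕ))) := by
  have hadj (k : ℕ) : G.Adj (v (i + k)) (v (i + (k + 1 : ℕ))) := by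
    simpa [add_assoc] using hv.adj_add_one (i + k)
  have hnadj {k l : ℕ} (hkl : k + 1 < l) (hl : l < 4) : ¬ G.Adj (v (i + k)) (v (i + l)) :=
    hv.not_adj_add_natCast i hkl (by omega)
  exact isInducedP4_of_adj (hadj 0) (hadj 1) (hadj 2) (hnadj (by omega) (by omega))
    (hnadj (by omega) (by omega)) (hnadj (by omega) (by omega))

variable {C : Set V} {x y : V}

theorem exists_adj_of_isMixedOn (hv : IsInducedCycle G n v) (hn : 5 ≤ n) (hG : TwoP4Free G)
    (hC : (G.induce C).Preconnected) (hCv : ∀ u ∈ C, ∀ k, ¬ G.Adj u (v k))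
    (hx : IsMixedOn G x C) (hxy : G.Adj x y) (hy : ∀ u ∈ C, ¬ G.Adj u y) (i : ZMod n) :
    ∃ k < 4, G.Adj x (v (i + (k : ℕ))) ∨ G.Adj y (v (i + (k : ℕ))) := by
  obtain ⟨q, hq, hxyq⟩ :=
    hx.exists_adj_of_isInducedP4 hG hC hxy hy (hv.isInducedP4 hn i) <| by
      rintro u hu q (rfl | rfl | rfl | rfl) <;> exact hCv u hu _
  rcases hq with rfl | rfl | rfl | rfl
  exacts [⟨0, by omega, hxyq⟩, ⟨1, by omega, hxyq⟩, ⟨2, by omega, hxyq⟩, ⟨3, by omega, hxyq⟩]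

theorem not_adj_of_isMixedOn (hv : IsInducedCycle G n v) (hn : 7 ≤ n) (hG : TwoP4Free G)
    (hC : (G.induce C).Preconnected) (hCv : ∀ u ∈ C, ∀ k, ¬ G.Adj u (v k))
    (hx : IsMixedOn G x C) {i : ZMod n}
    (hxv : Set.range v ∩ G.neighborSet x ⊆ {v i, v (i + 1), v (i + 2)})
    (hyC : ∀ u ∈ C, ¬ G.Adj u y) (hyv : ∀ k, ¬ G.Adj y (v k)) : ¬ G.Adj x y := by
  intro hxy
  obtain ⟨k, hk, hxk | hyk⟩ :=
    hv.exists_adj_of_isMixedOn (by omega) hG hC hCv hx hxy hyC (i + (3 : ℕ))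
  · have hne {l : ℕ} (hl : l < 3) : v (i + (3 : ℕ) + k) ≠ v (i + l) := by
      simpa [add_assoc] using
        (hv.apply_add_natCast_ne i (k := l) (l := 3 + k) (by omega) (by omega)).symm
    rcases hxv ⟨⟨_, rfl⟩, hxk⟩ with h | h | h
    · exact hne (l := 0) (by omega) (by simpa using h)
    · exact hne (l := 1) (by omega) (by simpa using h)
    · exact hne (l := 2) (by omega) (by simpa using h)
  · exact hyv _ hyk

theorem range_inter_neighborSet_ne_singleton (hv : IsInducedCycle G n v) (hn : 7 ≤ n)
    (hG : TwoP4Free G) (hC : (G.induce C).Preconnected)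
    (hCv : ∀ u ∈ C, ∀ k, ¬ G.Adj u (v k)) (hx : IsMixedOn G x C) (i : ZMod n) :
    Set.range v ∩ G.neighborSet x ≠ {v i} := by
  intro hxv
  have hxi : G.Adj x (v i) := (hxv.superset rfl).2
  obtain ⟨k, hk, hxk | hik⟩ :=
    hv.exists_adj_of_isMixedOn (by omega) hG hC hCv hx hxi (fun u hu => hCv u hu i)
      (i + (2 : ℕ))
  · have hki : v (i + (2 : ℕ) + k) = v i := hxv.subset ⟨⟨_, rfl⟩, hxk⟩
    refine hv.apply_add_natCast_ne i (k := 0) (l := 2 + k) (by omega) (by omega) ?_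
    simpa [add_assoc] using hki.symm
  · refine hv.not_adj_add_natCast i (k := 0) (l := 2 + k) (by omega) (by omega) ?_
    simpa [add_assoc] using hik

end IsInducedCycle

theorem stmt3_general {V : Type*} {G : SimpleGraph V} (hG : TwoP4Free G) {n : ℕ} (hn : 7 ≤ n)
    {v : ZMod n → V} (hv : IsInducedCycle G n v)
    {S : Set V} (hS : ∀ u ∈ S, ∀ k, ¬ G.Adj u (v k)) {x : V}
    (hxv : ∃ i : ZMod n, Set.range v ∩ G.neighborSet x = {v i} ∨
      Set.range v ∩ G.neighborSet x = {v i, v (i + 2)})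
    {C : Set V} (hC : IsCompOf G S C) (hx : IsMixedOn G x C) :
    (∀ w ∈ S \ C, ¬ G.Adj x w) ∧ (Set.range v ∩ G.neighborSet x).ncard = 2 := by
  obtain ⟨-, hCS, hconn, hclosed⟩ := hC
  have hCv : ∀ u ∈ C, ∀ k, ¬ G.Adj u (v k) := fun u hu => hS u (hCS hu)
  obtain ⟨i, hi | hi⟩ := hxv
  · exact absurd hi (hv.range_inter_neighborSet_ne_singleton hn hG hconn.preconnected hCv hx i)
  · constructor
    · rintro w ⟨hwS, hwC⟩
      have hwu : ∀ u ∈ C, ¬ G.Adj u w := fun u hu huw => hwC (hclosed u hu w hwS huw)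
      have hsub : Set.range v ∩ G.neighborSet x ⊆ {v i, v (i + 1), v (i + 2)} :=
        hi.subset.trans (Set.insert_subset_insert (Set.subset_insert _ _))
      exact hv.not_adj_of_isMixedOn hn hG hconn.preconnected hCv hx hsub hwu (hS w hwS)
    · have hne : v i ≠ v (i + 2) := by
        simpa using hv.apply_add_natCast_ne i (k := 0) (l := 2) (by omega) (by omega)
      rw [hi, Set.ncard_pair hne]

theorem stmt3 {V : Type*} [Fintype V] (G : SimpleGraph V) (h2P4 : TwoP4Free G)
    (v : ZMod 7 → V) (hv : IsInducedCycle G 7 v)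
    (N2 : Set V) (hN2 : N2 = {u | u ∉ Set.range v ∧ ∀ i, ¬ G.Adj u (v i)})
    (x : V) (hx : x ∉ Set.range v)
    (hxN0 : ∃ i : ZMod 7, {u | u ∈ Set.range v ∧ G.Adj x u} = {v i} ∨
      {u | u ∈ Set.range v ∧ G.Adj x u} = {v i, v (i + 2)})
    (C : Set V) (hC : IsCompOf G N2 C)
    (h1 : ∃ u ∈ C, G.Adj x u) (h2 : ∃ u ∈ C, ¬ G.Adj x u) :
    (∀ w ∈ N2 \ C, ¬ G.Adj x w) ∧
      {u | u ∈ Set.range v ∧ G.Adj x u}.ncard = 2 := by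
  exact stmt3_general h2P4 le_rfl hv (fun u hu => (hN2.subset hu).2) hxN0 hC ⟨h1, h2⟩
end

section
/- Let G be a finite simple graph that is 2P4-free, let v1,…,v7 induce a C7 in G with vertex set N0, and let N2 be the set of vertices outside N0 with no neighbor in N0. Let x and y be distinct vertices with N0(x) = N0(y) = {v_i} for some index i. Then N(x)∩N2 and N(y)∩N2 are comparable by inclusion, i.e., N(x)∩N2 ⊆ N(y)∩N2 or N(y)∩N2 ⊆ N(x)∩N2. -/
/-!
In a `P₄`-free graph, two neighbours `x`, `y` of a vertex `w` have nested neighbourhoods among the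
non-neighbours of `w`: private neighbours `p` of `x` and `q` of `y` would give an induced `P₄` on
`{w, x, y, p, q}`. In a `2P₄`-free graph, the vertices anticomplete to a fixed induced `P₄` induce
a `P₄`-free graph. On an induced cycle of length at least seven, the `P₄` on
`v (i + 2), …, v (i + 5)` is anticomplete to `v i`, to `x`, to `y` and to `N2`, so the first fact
applies with `w = v i`.
-/

section

variable {V : Type*} {G : SimpleGraph V}

/-- The vertices with no neighbour in `s`. A vertex of `s` is included if it is isolated in `s`;
this does not occur when `s` is the vertex set of an induced `P₄`, where these are exactly the
vertices outside `s` that are anticomplete to `s`. -/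
def nonNeighbors (G : SimpleGraph V) (s : Set V) : Set V :=
  {u | ∀ w ∈ s, ¬ G.Adj u w}

/-- The subgraph of `G` induced by `S` is `P₄`-free; this expresses that `S` induces a cograph
without passing to a subtype. -/
def P4FreeOn (G : SimpleGraph V) (S : Set V) : Prop :=
  ∀ a ∈ S, ∀ b ∈ S, ∀ c ∈ S, ∀ d ∈ S, ¬ IsInducedP4 G a b c d

namespace IsInducedP4

variable {a b c d : V}

theorem of_adj (hab : G.Adj a b) (hbc : G.Adj b c) (hcd : G.Adj c d)
    (hac : ¬ G.Adj a c) (had : ¬ G.Adj a d) (hbd : ¬ G.Adj b d) : IsInducedP4 G a b c d := by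
  refine ⟨hab.ne, ?_, ?_, hbc.ne, ?_, hcd.ne, hab, hbc, hcd, hac, had, hbd⟩
  · rintro rfl; exact had hcd
  · rintro rfl; exact hac hcd.symm
  · rintro rfl; exact had hab

theorem exists_adj_of_mem (h : IsInducedP4 G a b c d) {u : V} (hu : u ∈ ({a, b, c, d} : Set V)) :
    ∃ w ∈ ({a, b, c, d} : Set V), G.Adj u w := by
  obtain ⟨-, -, -, -, -, -, hab, hbc, hcd, -, -, -⟩ := h
  rcases hu with rfl | rfl | rfl | rfl
  · exact ⟨b, by simp, hab⟩
  · exact ⟨c, by simp, hbc⟩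
  · exact ⟨d, by simp, hcd⟩
  · exact ⟨c, by simp, hcd.symm⟩

theorem notMem_of_mem_nonNeighbors (h : IsInducedP4 G a b c d) {u : V}
    (hu : u ∈ nonNeighbors G {a, b, c, d}) : u ∉ ({a, b, c, d} : Set V) := fun hmem =>
  let ⟨w, hw, huw⟩ := h.exists_adj_of_mem hmem
  hu w hw huw

end IsInducedP4

theorem TwoP4Free.p4FreeOn_nonNeighbors (h : TwoP4Free G) {a b c d : V}
    (hP : IsInducedP4 G a b c d) : P4FreeOn G (nonNeighbors G {a, b, c, d}) := by
  intro p hp q hq r hr s hs hpqrs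
  refine h ⟨p, q, r, s, a, b, c, d, hpqrs, hP, fun u hu w hw => ?_⟩
  have hu' : u ∈ nonNeighbors G {a, b, c, d} := by
    rcases hu with rfl | rfl | rfl | rfl <;> assumption
  exact ⟨fun huw => hP.notMem_of_mem_nonNeighbors hu' (huw ▸ hw), hu' w hw⟩

theorem P4FreeOn.neighborSet_inter_subset_or_subset {S M : Set V} (hS : P4FreeOn G S) {w x y : V}
    (hw : w ∈ S) (hx : x ∈ S) (hy : y ∈ S) (hxw : G.Adj x w) (hyw : G.Adj y w)
    (hMS : M ⊆ S) (hMw : ∀ u ∈ M, ¬ G.Adj u w) :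
    G.neighborSet x ∩ M ⊆ G.neighborSet y ∩ M ∨ G.neighborSet y ∩ M ⊆ G.neighborSet x ∩ M := by
  by_contra! hcon
  rw [Set.not_subset, Set.not_subset] at hcon
  obtain ⟨⟨p, ⟨hxp : G.Adj x p, hp⟩, hp'⟩, ⟨q, ⟨hyq : G.Adj y q, hq⟩, hq'⟩⟩ := hcon
  have hyp : ¬ G.Adj y p := fun h => hp' ⟨h, hp⟩
  have hxq : ¬ G.Adj x q := fun h => hq' ⟨h, hq⟩
  have hwp : ¬ G.Adj w p := fun h => hMw p hp h.symm
  have hwq : ¬ G.Adj w q := fun h => hMw q hq h.symm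
  have hpS := hMS hp
  have hqS := hMS hq
  by_cases hxy : G.Adj x y <;> by_cases hpq : G.Adj p q
  · exact hS w hw x hx p hpS q hqS (.of_adj hxw.symm hxp hpq hwp hwq hxq)
  · exact hS p hpS x hx y hy q hqS
      (.of_adj hxp.symm hxy hyq (fun h => hyp h.symm) hpq hxq)
  · exact hS x hx p hpS q hqS y hy
      (.of_adj hxp hpq hyq.symm hxq hxy fun h => hyp h.symm)
  · exact hS p hpS x hx w hw y hy
      (.of_adj hxp.symm hxw hyw.symm (fun h => hwp h.symm) (fun h => hyp h.symm) hxy)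

namespace IsInducedCycle

variable {n : ℕ} {v : ZMod n → V}

theorem adj_add_natCast_iff (hv : IsInducedCycle G n v) (i : ZMod n) {a b : ℕ}
    (ha : a + 1 < n) (hb : b + 1 < n) :
    G.Adj (v (i + a)) (v (i + b)) ↔ b = a + 1 ∨ a = b + 1 := by
  have cast_inj {k l : ℕ} (hk : k < n) (hl : l < n) : (k : ZMod n) = l ↔ k = l :=
    (CharP.natCast_injOn_Iio (ZMod n) n).eq_iff hk hl
  rw [hv.2, add_assoc, add_assoc, add_right_inj, add_right_inj, ← Nat.cast_succ, ← Nat.cast_succ,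
    cast_inj (Nat.lt_of_succ_lt hb) ha, cast_inj (Nat.lt_of_succ_lt ha) hb]

theorem isInducedP4_add_natCast (hv : IsInducedCycle G n v) (i : ZMod n) {a : ℕ}
    (ha : a + 4 < n) :
    IsInducedP4 G (v (i + a)) (v (i + (a + 1 : ℕ))) (v (i + (a + 2 : ℕ)))
      (v (i + (a + 3 : ℕ))) := by
  apply IsInducedP4.of_adj <;> rw [hv.adj_add_natCast_iff i] <;> lia

theorem add_natCast_notMem_insert_neighborSet (hv : IsInducedCycle G n v) (i : ZMod n) {k : ℕ}
    (hk : 2 ≤ k) (hkn : k + 1 < n) :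
    v (i + k) ∉ insert (v i) (G.neighborSet (v i)) := by
  have hne : v (i + k) ≠ v i := by
    rw [hv.1.ne_iff, ne_eq, add_eq_left, ZMod.natCast_eq_zero_iff]
    exact Nat.not_dvd_of_pos_of_lt (by lia) (by lia)
  have hadj : ¬ G.Adj (v i) (v (i + k)) := by
    have := hv.adj_add_natCast_iff i (a := 0) (b := k) (by lia) hkn
    rw [Nat.cast_zero, add_zero] at this
    lia
  rintro (h | h)
  exacts [hne h, hadj h]

theorem mem_nonNeighbors_of_subset_insert_neighborSet (hv : IsInducedCycle G n v) (hn : 7 ≤ n)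
    {i : ZMod n} {u : V}
    (hu : G.neighborSet u ∩ Set.range v ⊆ insert (v i) (G.neighborSet (v i))) :
    u ∈ nonNeighbors G {v (i + (2 : ℕ)), v (i + (3 : ℕ)), v (i + (4 : ℕ)), v (i + (5 : ℕ))} := by
  have not_adj {k : ℕ} (hk : 2 ≤ k) (hkn : k + 1 < n) : ¬ G.Adj u (v (i + k)) := fun h =>
    hv.add_natCast_notMem_insert_neighborSet i hk hkn (hu ⟨h, Set.mem_range_self _⟩)
  rintro w (rfl | rfl | rfl | rfl) <;> exact not_adj (by lia) (by lia)

end IsInducedCycle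

end

theorem stmt10_general {V : Type*} {G : SimpleGraph V} (h2P4 : TwoP4Free G)
    {n : ℕ} (hn : 7 ≤ n) {v : ZMod n → V} (hv : IsInducedCycle G n v)
    {N2 : Set V} (hN2 : ∀ u ∈ N2, ∀ j, ¬ G.Adj u (v j))
    {x y : V} {i : ZMod n} (hxi : G.Adj x (v i)) (hyi : G.Adj y (v i))
    (hx : G.neighborSet x ∩ Set.range v ⊆ insert (v i) (G.neighborSet (v i)))
    (hy : G.neighborSet y ∩ Set.range v ⊆ insert (v i) (G.neighborSet (v i))) :
    G.neighborSet x ∩ N2 ⊆ G.neighborSet y ∩ N2 ∨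
      G.neighborSet y ∩ N2 ⊆ G.neighborSet x ∩ N2 := by
  have hP4Free := h2P4.p4FreeOn_nonNeighbors (hv.isInducedP4_add_natCast i (a := 2) (by lia))
  refine hP4Free.neighborSet_inter_subset_or_subset (w := v i) ?_ ?_ ?_ hxi hyi ?_
    fun u hu => hN2 u hu i
  · exact hv.mem_nonNeighbors_of_subset_insert_neighborSet hn fun _ h => .inr h.1
  · exact hv.mem_nonNeighbors_of_subset_insert_neighborSet hn hx
  · exact hv.mem_nonNeighbors_of_subset_insert_neighborSet hn hy
  · rintro u hu w (rfl | rfl | rfl | rfl) <;> exact hN2 u hu _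

theorem stmt10 {V : Type*} [Fintype V] (G : SimpleGraph V) (h2P4 : TwoP4Free G)
    (v : ZMod 7 → V) (hv : IsInducedCycle G 7 v)
    (N2 : Set V) (hN2 : N2 = {u | u ∉ Set.range v ∧ ∀ j, ¬ G.Adj u (v j)})
    (x y : V) (hxy : x ≠ y) (i : ZMod 7)
    (hx : {u | u ∈ Set.range v ∧ G.Adj x u} = {v i})
    (hy : {u | u ∈ Set.range v ∧ G.Adj y u} = {v i}) :
    G.neighborSet x ∩ N2 ⊆ G.neighborSet y ∩ N2 ∨
      G.neighborSet y ∩ N2 ⊆ G.neighborSet x ∩ N2 := by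
  exact stmt10_general h2P4 le_rfl hv (fun u hu => (hN2.subset hu).2) (hx.superset rfl).2
    (hy.superset rfl).2 (fun _ h => .inl (hx.subset h.symm)) (fun _ h => .inl (hy.subset h.symm))
end
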